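/- arXiv:2605.11350 — 4 statements merged into one kernel-verified Lean document; each statement's English description precedes it below -/
import Mathlib

section
/- Let x_1,…,x_N and y_1,…,y_N be 2N nonnegative real numbers with x_i ≥ y_i for all i, and suppose Σ_{m=1}^N ∏_{i=1}^m x_i > 0 and Σ_{m=1}^N ∏_{i=1}^m y_i > 0. Then for every k ∈ {1,…,N}: (Σ_{m=1}^k ∏_{i=1}^m x_i) / (Σ_{m=1}^N ∏_{i=1}^m x_i) ≤ (Σ_{m=1}^k ∏_{i=1}^m y_i) / (Σ_{m=1}^N ∏_{i=1}^m y_i). -/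
/-!
Write `P m`, `Q m` for the products of the first `m` terms of `x`, `y`. For `j ≤ m` the quotient
of `P m` by `P j` is a product of terms `x i`, which dominates the corresponding product of terms
`y i`; hence `P j * Q m ≤ P m * Q j` (`prod_mul_prod_le`), which is stated without division since
the products may vanish. After clearing denominators the claim is
`(∑ j ≤ k, P j) * (∑ m ≤ N, Q m) ≤ (∑ j ≤ k, Q j) * (∑ m ≤ N, P m)`. The terms with `m ≤ k`
contribute equally to both sides, and those with `m > k` are compared one by one.
-/

/-- The likelihood-ratio monotonicity `P j / Q j ≤ P m / Q m` of the partial products, in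
cross-multiplied form. -/
lemma prod_mul_prod_le {N : ℕ} {x y : ℕ → ℝ}
    (hx : ∀ i, 1 ≤ i → i ≤ N → 0 ≤ x i) (hy : ∀ i, 1 ≤ i → i ≤ N → 0 ≤ y i)
    (hxy : ∀ i, 1 ≤ i → i ≤ N → y i ≤ x i) {j m : ℕ} (hjm : j ≤ m) (hm : m ≤ N) :
    (∏ i ∈ Finset.Icc 1 j, x i) * ∏ i ∈ Finset.Icc 1 m, y i ≤
      (∏ i ∈ Finset.Icc 1 j, y i) * ∏ i ∈ Finset.Icc 1 m, x i := by
  induction m, hjm using Nat.le_induction with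
  | base => rw [mul_comm]
  | succ m hjm ih =>
    rw [Finset.prod_Icc_succ_top (by omega), Finset.prod_Icc_succ_top (by omega),
      ← mul_assoc, ← mul_assoc]
    refine mul_le_mul (ih (by omega)) (hxy _ (by omega) hm) (hy _ (by omega) hm)
      (mul_nonneg (Finset.prod_nonneg fun i hi => ?_) (Finset.prod_nonneg fun i hi => ?_))
    all_goals rw [Finset.mem_Icc] at hi
    · exact hy i hi.1 (by omega)
    · exact hx i hi.1 (by omega)

/-- **Lemma 3 (exchange-of-summation inequality).**
Let `x_1,…,x_N` and `y_1,…,y_N` be nonnegative reals with `x_i ≥ y_i` for all `i`, and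
suppose both `Σ_{m=1}^N ∏_{i=1}^m x_i` and `Σ_{m=1}^N ∏_{i=1}^m y_i` are strictly positive.
Then for every `k ∈ {1,…,N}`:
`(Σ_{m=1}^k ∏_{i=1}^m x_i)/(Σ_{m=1}^N ∏_{i=1}^m x_i)
  ≤ (Σ_{m=1}^k ∏_{i=1}^m y_i)/(Σ_{m=1}^N ∏_{i=1}^m y_i)`. -/
theorem stmt_9
    (N : ℕ) (x y : ℕ → ℝ)
    (hx_nonneg : ∀ i, 1 ≤ i → i ≤ N → 0 ≤ x i)
    (hy_nonneg : ∀ i, 1 ≤ i → i ≤ N → 0 ≤ y i)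
    (hxy : ∀ i, 1 ≤ i → i ≤ N → y i ≤ x i)
    (hX : 0 < ∑ m ∈ Finset.Icc 1 N, ∏ i ∈ Finset.Icc 1 m, x i)
    (hY : 0 < ∑ m ∈ Finset.Icc 1 N, ∏ i ∈ Finset.Icc 1 m, y i) :
    ∀ k, 1 ≤ k → k ≤ N →
      (∑ m ∈ Finset.Icc 1 k, ∏ i ∈ Finset.Icc 1 m, x i) /
          (∑ m ∈ Finset.Icc 1 N, ∏ i ∈ Finset.Icc 1 m, x i) ≤
        (∑ m ∈ Finset.Icc 1 k, ∏ i ∈ Finset.Icc 1 m, y i) /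
          (∑ m ∈ Finset.Icc 1 N, ∏ i ∈ Finset.Icc 1 m, y i) := by
  intro k _ hkN
  rw [div_le_div_iff₀ hX hY]
  -- Induction on the upper limit `n ≥ k` of the full sums, with the bound `n ≤ N` kept.
  have key : ∀ n, k ≤ n → n ≤ N →
      (∑ m ∈ Finset.Icc 1 k, ∏ i ∈ Finset.Icc 1 m, x i) *
          (∑ m ∈ Finset.Icc 1 n, ∏ i ∈ Finset.Icc 1 m, y i) ≤
        (∑ m ∈ Finset.Icc 1 k, ∏ i ∈ Finset.Icc 1 m, y i) *
          (∑ m ∈ Finset.Icc 1 n, ∏ i ∈ Finset.Icc 1 m, x i) := by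
    intro n hkn
    induction n, hkn using Nat.le_induction with
    | base => intro _; rw [mul_comm]
    | succ n hkn ih =>
      intro hn
      rw [Finset.sum_Icc_succ_top (by omega), Finset.sum_Icc_succ_top (by omega),
        mul_add, mul_add]
      refine add_le_add (ih (by omega)) ?_
      rw [Finset.sum_mul, Finset.sum_mul]
      refine Finset.sum_le_sum fun j hj => ?_
      rw [Finset.mem_Icc] at hj
      exact prod_mul_prod_le hx_nonneg hy_nonneg hxy (by omega) hn
  exact key N hkN le_rfl
end

section
/- Fix m ∈ {1,…,N−1} and a decay rate μ > 0. The function h(a) = (Σ_{k=1}^m A'_{k,m}(a)/μ^{k−1}) / (Σ_{k=1}^m A_{k,m}(a)/μ^{k−1} + Σ_{k=m+1}^N B_{k,m}/μ^{k−1}) is increasing in a on the interval (x⋆ − s_{m+1}, x⋆ − s_m], where A_{k,m}(a) = 1/∏_{i=k}^m λ(x⋆ − s_i − a) for k ∈ {1,…,m} and B_{k,m} = λ(0)^{k−m−1} for k ∈ {m+1,…,N}. -/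
/-!
The function `h` is a weighted average. With `r_i(a) = λ'(z_i)/λ(z_i)`, `z_i = x⋆ - s_i - a`, the
logarithmic derivative of `A_{k,m}` is `R_k = ∑_{i=k}^m r_i`, so `h` is the mean of `R_1, …, R_m`
and `0` with weights `A_{k,m}/μ^{k-1}` and `C = ∑ B_{k,m}/μ^{k-1} > 0`.

Two effects push `h` up as `a` increases. Concavity and strict monotonicity of `λ` make `λ'/λ`
positive and strictly decreasing, so every `R_k` strictly increases in `a`. Moreover
`A_{k,m}/A_{l,m} = ∏_{i=k}^{l-1} λ(z_i)⁻¹` increases for `k ≤ l`, and every `A_{k,m}` increases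
relative to `C`, so the weights shift towards small `k`, where `R_k` is larger.
The second effect is Chebyshev's sum inequality, and `weighted_mean_lt` combines the two.
-/

open Set Filter

/-- `A_{k,m}(a) = 1 / ∏_{i=k}^m λ(x⋆ − s_i − a)`. -/
noncomputable def Afun (lam : ℝ → ℝ) (xstar : ℝ) (s : ℕ → ℝ) (k m : ℕ) (a : ℝ) : ℝ :=
  (∏ i ∈ Finset.Icc k m, lam (xstar - s i - a))⁻¹

/-- The mean of `R` with weights `X` is below the mean of `Q > R` with weights `Y`, where both means
also include the value `0` with weight `C`. By `hlr` the ratio `Y / X` is largest at small indices,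
where `R` is largest by `hanti`, so passing from `X` to `Y` does not lower the mean of `R`. -/
theorem weighted_mean_lt (S : Finset ℕ) (hS : S.Nonempty) (X Y R Q : ℕ → ℝ) (C : ℝ) (hC : 0 < C)
    (hX : ∀ k ∈ S, 0 < X k) (hXY : ∀ k ∈ S, X k ≤ Y k)
    (hR : ∀ k ∈ S, 0 < R k) (hRQ : ∀ k ∈ S, R k < Q k)
    (hlr : ∀ k ∈ S, ∀ l ∈ S, k ≤ l → X k * Y l ≤ Y k * X l)
    (hanti : ∀ k ∈ S, ∀ l ∈ S, k ≤ l → R l ≤ R k) :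
    (∑ k ∈ S, X k * R k) / (∑ k ∈ S, X k + C) < (∑ k ∈ S, Y k * Q k) / (∑ k ∈ S, Y k + C) := by
  have hY : ∀ k ∈ S, 0 < Y k := fun k hk => (hX k hk).trans_le (hXY k hk)
  have sX : 0 < ∑ k ∈ S, X k := Finset.sum_pos hX hS
  have sY : 0 < ∑ k ∈ S, Y k := Finset.sum_pos hY hS
  have hdouble : 0 ≤ ∑ k ∈ S, ∑ l ∈ S, (Y k * X l - X k * Y l) * (R k - R l) := by
    refine Finset.sum_nonneg fun k hk => Finset.sum_nonneg fun l hl => ?_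
    rcases le_total k l with h | h
    · exact mul_nonneg (sub_nonneg.2 (hlr k hk l hl h)) (sub_nonneg.2 (hanti k hk l hl h))
    · refine mul_nonneg_of_nonpos_of_nonpos ?_ (sub_nonpos.2 (hanti l hl k hk h))
      linarith [hlr l hl k hk h, mul_comm (X l) (Y k), mul_comm (Y l) (X k)]
  have hexpand : ∑ k ∈ S, ∑ l ∈ S, (Y k * X l - X k * Y l) * (R k - R l)
      = 2 * ((∑ k ∈ S, Y k * R k) * (∑ k ∈ S, X k)
          - (∑ k ∈ S, X k * R k) * (∑ k ∈ S, Y k)) := by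
    have e : ∀ k l, (Y k * X l - X k * Y l) * (R k - R l)
        = (Y k * R k) * X l - (X k * R k) * Y l - Y k * (X l * R l) + X k * (Y l * R l) := by
      intros; ring
    simp only [e, Finset.sum_add_distrib, Finset.sum_sub_distrib, ← Finset.sum_mul_sum]
    ring
  have hcheb : (∑ k ∈ S, X k * R k) * (∑ k ∈ S, Y k)
      ≤ (∑ k ∈ S, Y k * R k) * (∑ k ∈ S, X k) := by linarith
  have hmass : ∑ k ∈ S, X k * R k ≤ ∑ k ∈ S, Y k * R k :=
    Finset.sum_le_sum fun k hk => mul_le_mul_of_nonneg_right (hXY k hk) (hR k hk).le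
  have hstrict : ∑ k ∈ S, Y k * R k < ∑ k ∈ S, Y k * Q k :=
    Finset.sum_lt_sum_of_nonempty hS fun k hk => mul_lt_mul_of_pos_left (hRQ k hk) (hY k hk)
  rw [div_lt_div_iff₀ (by positivity) (by positivity)]
  nlinarith [mul_le_mul_of_nonneg_right hmass hC.le,
    mul_lt_mul_of_pos_right hstrict (add_pos sX hC)]

theorem deriv_pos_of_concave (lam : ℝ → ℝ) (hlam_mono : StrictMonoOn lam (Ici 0))
    (hlam_concave : ConcaveOn ℝ (Ici 0) lam) (hlam_diff : Differentiable ℝ lam)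
    (x : ℝ) (hx : 0 ≤ x) : 0 < deriv lam x := by
  have hx1 : (0 : ℝ) ≤ x + 1 := by linarith
  have h := hlam_concave.slope_le_deriv (x := x) (y := x + 1) hx hx1 (by linarith) (hlam_diff x)
  have h2 := hlam_mono (a := x) (b := x + 1) hx hx1 (by linarith)
  rw [slope_def_field] at h
  have : x + 1 - x = 1 := by ring
  rw [this, div_one] at h
  linarith

theorem logDeriv_strictAnti (lam : ℝ → ℝ) (hlam_pos : ∀ x, 0 ≤ x → 0 < lam x)
    (hlam_mono : StrictMonoOn lam (Ici 0))
    (hlam_concave : ConcaveOn ℝ (Ici 0) lam) (hlam_diff : Differentiable ℝ lam) :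
    StrictAntiOn (fun x => deriv lam x / lam x) (Ici 0) := by
  intro x hx y hy hxy
  have h1 : deriv lam y ≤ deriv lam x :=
    hlam_concave.antitoneOn_deriv (fun z _ => hlam_diff z) hx hy hxy.le
  have h2 := hlam_mono hx hy hxy
  have h3 := deriv_pos_of_concave lam hlam_mono hlam_concave hlam_diff x hx
  exact (div_le_div_of_nonneg_right h1 (hlam_pos y hy).le).trans_lt
    (div_lt_div_of_pos_left h3 (hlam_pos x hx) h2)

/-- The logarithmic derivative of `A_{k,m}` at `a` is `∑_{i=k}^m λ'(z_i)/λ(z_i)` with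
`z_i = x⋆ - s_i - a`; the two minus signs, from `1/λ` and from `-a`, cancel. -/
theorem deriv_Afun (lam : ℝ → ℝ) (xstar : ℝ) (s : ℕ → ℝ) (k m : ℕ) (a : ℝ)
    (hlam_diff : Differentiable ℝ lam)
    (hne : ∀ i ∈ Finset.Icc k m, lam (xstar - s i - a) ≠ 0) :
    deriv (Afun lam xstar s k m) a = Afun lam xstar s k m a *
      ∑ i ∈ Finset.Icc k m, deriv lam (xstar - s i - a) / lam (xstar - s i - a) := by
  have hd : ∀ i, HasDerivAt (fun a => lam (xstar - s i - a)) (-deriv lam (xstar - s i - a)) a := by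
    intro i
    have h := (hlam_diff (xstar - s i - a)).hasDerivAt.comp a
      ((hasDerivAt_id a).const_sub (xstar - s i))
    simpa [Function.comp_def] using h
  have hA : Afun lam xstar s k m
      = fun b => ∏ i ∈ Finset.Icc k m, (lam (xstar - s i - b))⁻¹ := by
    funext b; simp [Afun]
  have hdi : ∀ i ∈ Finset.Icc k m, HasDerivAt (fun b => (lam (xstar - s i - b))⁻¹)
      (deriv lam (xstar - s i - a) / lam (xstar - s i - a) ^ 2) a := by
    intro i hi
    simpa using (hd i).fun_inv (hne i hi)
  rw [hA, (HasDerivAt.fun_finsetProd hdi).deriv, Finset.mul_sum]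
  refine Finset.sum_congr rfl fun i hi => ?_
  beta_reduce
  rw [← Finset.mul_prod_erase _ _ hi, smul_eq_mul]
  have := hne i hi
  field_simp

/-- **Lemma 4 (monotonicity of the auxiliary ratio `h`).**
Fix `m ∈ {1,…,N−1}` and a decay rate `μ > 0`.  The function
`h(a) = (Σ_{k=1}^m A'_{k,m}(a)/μ^{k−1}) /
        (Σ_{k=1}^m A_{k,m}(a)/μ^{k−1} + Σ_{k=m+1}^N B_{k,m}/μ^{k−1})`,
with `A_{k,m}(a) = 1/∏_{i=k}^m λ(x⋆−s_i−a)` and `B_{k,m} = λ(0)^{k−m−1}`, is increasing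
in `a` on the interval `(x⋆ − s_{m+1}, x⋆ − s_m]`. -/
theorem stmt_10
    (p : ℝ → ℝ) (γ : ℝ)
    (hp_nonneg : ∀ x, 0 ≤ p x)
    (hp_mono : Monotone p)
    (hp_concave : ConcaveOn ℝ univ p)
    (hp_cont : Continuous p)
    (hp_diff : Differentiable ℝ p)
    (hp_diff2 : Differentiable ℝ (deriv p))
    (hγ : 0 < γ)
    (hlimsup : Filter.limsup (fun x => p x / x) atTop < γ)
    (xstar : ℝ)
    (hxstar : IsGreatest {x : ℝ | 0 ≤ x ∧ ∀ y, 0 ≤ y → p y - γ * y ≤ p x - γ * x} xstar)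
    (N : ℕ) (hN : 2 ≤ N)
    (s : ℕ → ℝ)
    (hs_mono : ∀ i j, 1 ≤ i → i ≤ j → j ≤ N → s i ≤ s j)
    (lam : ℝ → ℝ)
    (hlam_pos : ∀ x, 0 ≤ x → 0 < lam x)
    (hlam_mono : StrictMonoOn lam (Ici 0))
    (hlam_concave : ConcaveOn ℝ (Ici 0) lam)
    (hlam_diff : Differentiable ℝ lam)
    (μ : ℝ) (hμ : 0 < μ)
    (m : ℕ) (hm1 : 1 ≤ m) (hm2 : m ≤ N - 1) :
    StrictMonoOn
      (fun a =>
        (∑ k ∈ Finset.Icc 1 m, deriv (Afun lam xstar s k m) a / μ ^ (k - 1)) /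
          ((∑ k ∈ Finset.Icc 1 m, Afun lam xstar s k m a / μ ^ (k - 1)) +
            ∑ k ∈ Finset.Icc (m + 1) N, lam 0 ^ (k - m - 1) / μ ^ (k - 1)))
      (Ioc (xstar - s (m + 1)) (xstar - s m)) := by
  have hmN : m + 1 ≤ N := by omega
  have hC : 0 < ∑ k ∈ Finset.Icc (m + 1) N, lam 0 ^ (k - m - 1) / μ ^ (k - 1) :=
    Finset.sum_pos (fun k _ => div_pos (pow_pos (hlam_pos 0 le_rfl) _) (pow_pos hμ _))
      ⟨m + 1, Finset.mem_Icc.2 ⟨le_rfl, hmN⟩⟩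
  intro a ha b hb hab
  -- All arguments of `λ` stay in `[0, ∞)`; only the right end of the interval matters for this.
  have hz : ∀ c, c ≤ xstar - s m → ∀ i, 1 ≤ i → i ≤ m → 0 ≤ xstar - s i - c := by
    intro c hc i h1 h2
    linarith [hs_mono i m h1 h2 (by omega)]
  have hza := hz a ha.2
  have hzb := hz b hb.2
  have hApos : ∀ c, c ≤ xstar - s m → ∀ k, 1 ≤ k → 0 < Afun lam xstar s k m c := by
    intro c hc k hk
    refine inv_pos.2 (Finset.prod_pos fun i hi => ?_)
    rw [Finset.mem_Icc] at hi
    exact hlam_pos _ (hz c hc i (hk.trans hi.1) hi.2)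
  have hnum : ∀ c, c ≤ xstar - s m →
      ∑ k ∈ Finset.Icc 1 m, deriv (Afun lam xstar s k m) c / μ ^ (k - 1)
      = ∑ k ∈ Finset.Icc 1 m, Afun lam xstar s k m c / μ ^ (k - 1) *
        ∑ i ∈ Finset.Icc k m, deriv lam (xstar - s i - c) / lam (xstar - s i - c) := by
    intro c hc
    refine Finset.sum_congr rfl fun k hk => ?_
    rw [Finset.mem_Icc] at hk
    rw [deriv_Afun lam xstar s k m c hlam_diff]
    · ring
    · intro i hi
      rw [Finset.mem_Icc] at hi
      exact (hlam_pos _ (hz c hc i (hk.1.trans hi.1) hi.2)).ne'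
  have hrpos : ∀ i, 1 ≤ i → i ≤ m →
      0 < deriv lam (xstar - s i - a) / lam (xstar - s i - a) := fun i h1 h2 =>
    div_pos (deriv_pos_of_concave lam hlam_mono hlam_concave hlam_diff _ (hza i h1 h2))
      (hlam_pos _ (hza i h1 h2))
  have hlamle : ∀ i, 1 ≤ i → i ≤ m → lam (xstar - s i - b) ≤ lam (xstar - s i - a) :=
    fun i h1 h2 => hlam_mono.monotoneOn (hzb i h1 h2) (hza i h1 h2) (by linarith)
  have hAmono : ∀ k, 1 ≤ k → Afun lam xstar s k m a ≤ Afun lam xstar s k m b := by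
    intro k hk
    refine inv_anti₀ (inv_pos.1 (hApos b hb.2 k hk)) (Finset.prod_le_prod ?_ ?_) <;>
      intro i hi <;> rw [Finset.mem_Icc] at hi
    · exact (hlam_pos _ (hzb i (hk.trans hi.1) hi.2)).le
    · exact hlamle i (hk.trans hi.1) hi.2
  have hsplit : ∀ c k l, 1 ≤ k → k ≤ l → l ≤ m → Afun lam xstar s k m c
      = (∏ i ∈ Finset.Ico k l, lam (xstar - s i - c))⁻¹ * Afun lam xstar s l m c := by
    intro c k l _ hkl hlm
    have e : ∀ j, Finset.Icc j m = Finset.Ico j (m + 1) := by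
      intro j; ext; simp only [Finset.mem_Icc, Finset.mem_Ico]; omega
    simp only [Afun, e]
    rw [← Finset.prod_Ico_consecutive _ hkl (by omega : l ≤ m + 1), mul_inv]
  have hAlr : ∀ k l, 1 ≤ k → k ≤ l → l ≤ m →
      Afun lam xstar s k m a * Afun lam xstar s l m b
        ≤ Afun lam xstar s k m b * Afun lam xstar s l m a := by
    intro k l hk hkl hlm
    rw [hsplit a k l hk hkl hlm, hsplit b k l hk hkl hlm]
    have hinv : (∏ i ∈ Finset.Ico k l, lam (xstar - s i - a))⁻¹
        ≤ (∏ i ∈ Finset.Ico k l, lam (xstar - s i - b))⁻¹ := by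
      refine inv_anti₀ (Finset.prod_pos ?_) (Finset.prod_le_prod ?_ ?_) <;>
        intro i hi <;> rw [Finset.mem_Ico] at hi
      · exact hlam_pos _ (hzb i (by omega) (by omega))
      · exact (hlam_pos _ (hzb i (by omega) (by omega))).le
      · exact hlamle i (by omega) (by omega)
    have := mul_le_mul_of_nonneg_right hinv
      (mul_pos (hApos a ha.2 l (hk.trans hkl)) (hApos b hb.2 l (hk.trans hkl))).le
    linarith
  beta_reduce
  rw [hnum a ha.2, hnum b hb.2]
  refine weighted_mean_lt (Finset.Icc 1 m) ⟨1, Finset.mem_Icc.2 ⟨le_rfl, hm1⟩⟩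
    (fun k => Afun lam xstar s k m a / μ ^ (k - 1)) (fun k => Afun lam xstar s k m b / μ ^ (k - 1))
    (fun k => ∑ i ∈ Finset.Icc k m, deriv lam (xstar - s i - a) / lam (xstar - s i - a))
    (fun k => ∑ i ∈ Finset.Icc k m, deriv lam (xstar - s i - b) / lam (xstar - s i - b))
    _ hC ?_ ?_ ?_ ?_ ?_ ?_
  · intro k hk
    exact div_pos (hApos a ha.2 k (Finset.mem_Icc.1 hk).1) (pow_pos hμ _)
  · intro k hk
    exact div_le_div_of_nonneg_right (hAmono k (Finset.mem_Icc.1 hk).1) (pow_pos hμ _).le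
  · intro k hk
    rw [Finset.mem_Icc] at hk
    refine Finset.sum_pos (fun i hi => ?_) ⟨m, Finset.mem_Icc.2 ⟨hk.2, le_rfl⟩⟩
    rw [Finset.mem_Icc] at hi
    exact hrpos i (hk.1.trans hi.1) hi.2
  · intro k hk
    rw [Finset.mem_Icc] at hk
    refine Finset.sum_lt_sum_of_nonempty ⟨m, Finset.mem_Icc.2 ⟨hk.2, le_rfl⟩⟩ fun i hi => ?_
    rw [Finset.mem_Icc] at hi
    exact logDeriv_strictAnti lam hlam_pos hlam_mono hlam_concave hlam_diff
      (hzb i (hk.1.trans hi.1) hi.2) (hza i (hk.1.trans hi.1) hi.2) (by linarith)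
  · intro k hk l hl hkl
    rw [Finset.mem_Icc] at hk hl
    rw [div_mul_div_comm, div_mul_div_comm]
    exact div_le_div_of_nonneg_right (hAlr k l hk.1 hkl hl.2)
      (mul_pos (pow_pos hμ _) (pow_pos hμ _)).le
  · intro k hk l hl hkl
    rw [Finset.mem_Icc] at hk hl
    refine Finset.sum_le_sum_of_subset_of_nonneg (Finset.Icc_subset_Icc_left hkl) fun i hi _ => ?_
    rw [Finset.mem_Icc] at hi
    exact (hrpos i (hk.1.trans hi.1) hi.2).le
end

section
/- Consider the piecewise-linear production function p(x) = min(1, βx) and cost c(e) = γe with β > γ. Then for every skill s ≥ 0, proficiency ā ≥ 0 and reliability q ∈ [0,1], the utility-maximizing effort is e⋆(s,ā,q) = (1/β − s)⁺ if q ≤ (β−γ)/β and e⋆(s,ā,q) = (1/β − s − ā)⁺ otherwise; the corresponding productivity is p⋆(s,ā,q) = 1 if q ≤ (β−γ)/β and p⋆(s,ā,q) = q + (1−q)·max(min(1, βs), 1 − βā) otherwise. -/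
/-!
The utility `u(e) = q·p(s+e+ā) + (1−q)·p(s+e) − γe` is concave and piecewise linear in `e`, with
slopes `β − γ > 0` up to `1/β − s − ā`, then `(1−q)β − γ` up to `1/β − s`, then `−γ < 0`.
The middle slope is nonnegative exactly when `q ≤ (β−γ)/β`, which decides which of the two kinks
(truncated at `0`) is the largest maximizer. `isGreatest_high_kink` and `isGreatest_low_kink` treat
the two cases; uniqueness of greatest elements then identifies the effort, and the productivity is
its value there.
-/

open Set Filter

/-- Expected utility of effort `e` under `p(x) = min(1, βx)` and `c(e) = γe`, where assistance `a`
is available with probability `q`. -/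
def utility (β γ s a q e : ℝ) : ℝ :=
  q * min 1 (β * (s + e + a)) + (1 - q) * min 1 (β * (s + e)) - γ * e

/-- A nonnegative `E` that is no worse than smaller efforts and strictly better than larger ones
is the largest maximizer. -/
lemma isGreatest_of_le_of_lt {u : ℝ → ℝ} {E : ℝ} (hE : 0 ≤ E)
    (hle : ∀ e, 0 ≤ e → e ≤ E → u e ≤ u E) (hlt : ∀ e, E < e → u e < u E) :
    IsGreatest {e : ℝ | 0 ≤ e ∧ ∀ e', 0 ≤ e' → u e' ≤ u e} E := by
  refine ⟨⟨hE, fun e he => ?_⟩, fun e he => ?_⟩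
  · rcases le_or_gt e E with h | h
    · exact hle e he h
    · exact (hlt e h).le
  · by_contra! h
    exact absurd (he.2 E hE) (not_le.mpr (hlt e h))

lemma one_le_mul_add_max {β : ℝ} (hβ : 0 < β) (x : ℝ) : 1 ≤ β * (x + max (1 / β - x) 0) := by
  have h : β * (1 / β) ≤ β * (x + max (1 / β - x) 0) :=
    mul_le_mul_of_nonneg_left (by linarith [le_max_left (1 / β - x) 0]) hβ.le
  rwa [mul_one_div_cancel hβ.ne'] at h

lemma isGreatest_high_kink {β γ s a q : ℝ} (hγ : 0 < γ) (hβ : 0 < β) (ha : 0 ≤ a)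
    (hq0 : 0 ≤ q) (hq1 : q ≤ 1) (hq : γ ≤ (1 - q) * β) :
    IsGreatest {e : ℝ | 0 ≤ e ∧ ∀ e', 0 ≤ e' → utility β γ s a q e' ≤ utility β γ s a q e}
      (max (1 / β - s) 0) := by
  have h1 := one_le_mul_add_max hβ s
  have hβa : 0 ≤ β * a := by positivity
  have hE0 : 0 ≤ max (1 / β - s) 0 := le_max_right _ _
  have hcase : max (1 / β - s) 0 = 0 ∨ β * (s + max (1 / β - s) 0) = 1 := by
    rcases le_total (1 / β - s) 0 with h | h
    · exact Or.inl (max_eq_right h)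
    · right
      rw [max_eq_left h]
      field_simp
      ring
  generalize max (1 / β - s) 0 = E at *
  have hval : utility β γ s a q E = 1 - γ * E := by
    rw [utility, min_eq_left h1, min_eq_left (by linarith)]
    ring
  have hub (e : ℝ) : utility β γ s a q e ≤ q + (1 - q) * min 1 (β * (s + e)) - γ * e := by
    have := mul_le_mul_of_nonneg_left (min_le_left 1 (β * (s + e + a))) hq0
    unfold utility
    linarith
  refine isGreatest_of_le_of_lt hE0 (fun e he0 he => ?_) (fun e he => ?_)
  · rcases hcase with h0 | h
    · rw [le_antisymm he (h0 ▸ he0)]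
    · have h2 := mul_le_mul_of_nonneg_left (min_le_right 1 (β * (s + e))) (sub_nonneg.mpr hq1)
      have h3 := mul_nonneg (sub_nonneg.mpr hq) (sub_nonneg.mpr he)
      have h4 : (1 - q) * (β * (s + E)) = 1 - q := by rw [h, mul_one]
      rw [hval]
      linarith [hub e]
  · have h2 := mul_le_mul_of_nonneg_left (min_le_left 1 (β * (s + e))) (sub_nonneg.mpr hq1)
    have h3 := mul_lt_mul_of_pos_left he hγ
    rw [hval]
    linarith [hub e]

lemma isGreatest_low_kink {β γ s a q : ℝ} (hβ : 0 < β) (hβγ : γ < β) (ha : 0 ≤ a)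
    (hq0 : 0 ≤ q) (hq1 : q ≤ 1) (hq : (1 - q) * β < γ) :
    IsGreatest {e : ℝ | 0 ≤ e ∧ ∀ e', 0 ≤ e' → utility β γ s a q e' ≤ utility β γ s a q e}
      (max (1 / β - s - a) 0) := by
  have h1 := one_le_mul_add_max hβ (s + a)
  have hβa : 0 ≤ β * a := by positivity
  have hE0 : 0 ≤ max (1 / β - s - a) 0 := le_max_right _ _
  have hcase : max (1 / β - s - a) 0 = 0 ∨ β * (s + max (1 / β - s - a) 0 + a) = 1 := by
    rcases le_total (1 / β - s - a) 0 with h | h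
    · exact Or.inl (max_eq_right h)
    · right
      rw [max_eq_left h]
      field_simp
      ring
  rw [← sub_sub] at h1
  generalize max (1 / β - s - a) 0 = E at *
  have hval : utility β γ s a q E = q + (1 - q) * min 1 (β * (s + E)) - γ * E := by
    rw [utility, min_eq_left (by linarith), mul_one]
  refine isGreatest_of_le_of_lt hE0 (fun e he0 he => ?_) (fun e he => ?_)
  · rcases hcase with h0 | h
    · rw [le_antisymm he (h0 ▸ he0)]
    · have h2 := mul_le_mul_of_nonneg_left (min_le_right 1 (β * (s + e))) (sub_nonneg.mpr hq1)
      have h3 := mul_le_mul_of_nonneg_left (min_le_right 1 (β * (s + e + a))) hq0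
      have h4 := mul_nonneg (sub_nonneg.mpr hβγ.le) (sub_nonneg.mpr he)
      have h5 : q * (β * (s + E + a)) = q := by rw [h, mul_one]
      rw [hval, min_eq_right (by linarith)]
      unfold utility
      linarith
  · have h2 := mul_le_mul_of_nonneg_left (min_le_left 1 (β * (s + e + a))) hq0
    -- `x ↦ min 1 (β x)` is `β`-Lipschitz.
    have hlip : min 1 (β * (s + e)) ≤ min 1 (β * (s + E)) + β * (e - E) := by
      have h6 : 0 < β * (e - E) := mul_pos hβ (sub_pos.mpr he)
      rcases min_cases 1 (β * (s + E)) with h | h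
      · linarith [min_le_left 1 (β * (s + e))]
      · linarith [min_le_right 1 (β * (s + e))]
    have h3 := mul_le_mul_of_nonneg_left hlip (sub_nonneg.mpr hq1)
    have h4 := mul_pos (sub_pos.mpr hq) (sub_pos.mpr he)
    rw [hval]
    unfold utility
    linarith

/-- **Lemma 6 (piecewise-linear production under AI unreliability).**
For `p(x) = min(1, βx)`, `c(e) = γe` with `β > γ > 0`: for every skill `s ≥ 0`,
proficiency `ā ≥ 0` and reliability `q ∈ [0,1]`, the (largest) utility-maximizing effort is
`(1/β − s)⁺` if `q ≤ (β−γ)/β` and `(1/β − s − ā)⁺` otherwise; the corresponding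
productivity is `1` if `q ≤ (β−γ)/β` and `q + (1−q)·max(min(1, βs), 1 − βā)` otherwise. -/
theorem stmt_14
    (β γ : ℝ) (hγ : 0 < γ) (hβγ : γ < β)
    (estar : ℝ → ℝ → ℝ → ℝ)
    (hestar : ∀ s abar q, 0 ≤ s → 0 ≤ abar → 0 ≤ q → q ≤ 1 →
      IsGreatest {e : ℝ | 0 ≤ e ∧ ∀ e', 0 ≤ e' →
        q * min 1 (β * (s + e' + abar)) + (1 - q) * min 1 (β * (s + e')) - γ * e' ≤
          q * min 1 (β * (s + e + abar)) + (1 - q) * min 1 (β * (s + e)) - γ * e}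
        (estar s abar q)) :
    ∀ s abar q, 0 ≤ s → 0 ≤ abar → 0 ≤ q → q ≤ 1 →
      (estar s abar q =
        if q ≤ (β - γ) / β then max (1 / β - s) 0 else max (1 / β - s - abar) 0) ∧
      (q * min 1 (β * (s + estar s abar q + abar)) +
          (1 - q) * min 1 (β * (s + estar s abar q)) =
        if q ≤ (β - γ) / β then 1
        else q + (1 - q) * max (min 1 (β * s)) (1 - β * abar)) := by
  intro s a q hs ha hq0 hq1
  have hβ : 0 < β := hγ.trans hβγ
  have hβa : 0 ≤ β * a := by positivity
  have hthr : q ≤ (β - γ) / β ↔ γ ≤ (1 - q) * β := by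
    rw [le_div_iff₀ hβ]
    constructor <;> intro h <;> linarith
  have hg := hestar s a q hs ha hq0 hq1
  by_cases hq : q ≤ (β - γ) / β
  · have hE := hg.unique (isGreatest_high_kink hγ hβ ha hq0 hq1 (hthr.mp hq))
    rw [if_pos hq, if_pos hq]
    refine ⟨hE, ?_⟩
    have h1 := one_le_mul_add_max hβ s
    rw [← hE] at h1
    rw [min_eq_left h1, min_eq_left (by linarith)]
    ring
  · have hE := hg.unique
      (isGreatest_low_kink hβ hβγ ha hq0 hq1 (not_le.mp (fun h => hq (hthr.mpr h))))
    rw [if_neg hq, if_neg hq]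
    refine ⟨hE, ?_⟩
    have h1 := one_le_mul_add_max hβ (s + a)
    rw [← sub_sub, ← hE] at h1
    rw [min_eq_left (by linarith), mul_one]
    congr 2
    have hinv : β * (1 / β) = 1 := mul_one_div_cancel hβ.ne'
    rcases le_total (1 / β - s - a) 0 with h | h
    · rw [max_eq_right h] at hE
      rw [hE] at h1 ⊢
      rw [add_zero, max_eq_left]
      exact le_min (by linarith) (by linarith)
    · rw [max_eq_left h] at hE
      have h2 : β * (s + estar s a q) = 1 - β * a := by
        rw [hE]
        linarith
      have h3 := mul_nonneg hβ.le h
      rw [h2, min_eq_right (by linarith), max_eq_right]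
      exact (min_le_right _ _).trans (by linarith)
end

section
/- Suppose λ is increasing. Fix ā and q; if the Bayesian expected effort e_b⋆(s,ā,q) is non-monotonic in s, then there exist a decay rate μ > 0 and a finite ordered skill set S such that the steady-state skill distribution π(μ,ā,q,S) is multimodal. -/
/-!
Since effort is not weakly decreasing, there are skills `a ≤ b` with `e_b⋆(a) < e_b⋆(b)`, hence
`λ(e_b⋆(a)) < λ(e_b⋆(b))`. For `μ` strictly between these two rates and the skill set `(a, b, b)`,
the steady-state weights fall from level 1 to level 2 (ratio `λ(e_b⋆(a))/μ < 1`) and rise from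
level 2 to level 3 (ratio `λ(e_b⋆(b))/μ > 1`), so both endpoints are peaks. Nonnegativity of the
effort (`ebstar_nonneg`) keeps all arguments of `λ` in the domain where it is positive and
increasing.
-/

open Set Filter

/-- Bayesian expected effort of a signal follower with verification ability `v`:
`e_b⋆(s,ā,q) = P(â=ā|s)·e⋆(s,ā,q₁(q,s)) + P(â=0|s)·e⋆(s,ā,q₀(q,s))`. -/
noncomputable def ebstar (v : ℝ → ℝ) (estar : ℝ → ℝ → ℝ → ℝ) (abar q s : ℝ) : ℝ :=
  (q * v s + (1 - q) * (1 - v s)) *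
      estar s abar (q * v s / (q * v s + (1 - q) * (1 - v s))) +
    (q * (1 - v s) + (1 - q) * v s) *
      estar s abar (q * (1 - v s) / (q * (1 - v s) + (1 - q) * v s))

/-- Unnormalized steady-state weight `∏_{i=1}^{k−1} λ(e_b⋆(s_i))/μ`. -/
noncomputable def piW (lam : ℝ → ℝ) (eb : ℝ → ℝ) (s : ℕ → ℝ) (μ : ℝ) (k : ℕ) : ℝ :=
  ∏ i ∈ Finset.Icc 1 (k - 1), lam (eb (s i)) / μ

/-- Steady-state probability `π_k = piW k / Σ_{j=1}^N piW j`. -/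
noncomputable def piDist (lam : ℝ → ℝ) (eb : ℝ → ℝ) (s : ℕ → ℝ) (N : ℕ) (μ : ℝ)
    (k : ℕ) : ℝ :=
  piW lam eb s μ k / ∑ j ∈ Finset.Icc 1 N, piW lam eb s μ j

/-- `k` is a peak (strict local maximum) of the finite sequence `w 1, …, w N`. -/
def IsPeak (w : ℕ → ℝ) (N k : ℕ) : Prop :=
  1 ≤ k ∧ k ≤ N ∧ (k = 1 ∨ w (k - 1) < w k) ∧ (k = N ∨ w (k + 1) < w k)

/-- A finite sequence is multimodal if it has at least two peaks. -/
def Multimodal (w : ℕ → ℝ) (N : ℕ) : Prop :=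
  ∃ k₁ k₂, IsPeak w N k₁ ∧ IsPeak w N k₂ ∧ k₁ ≠ k₂

/-- A finite ordered skill set `s_1 ≤ … ≤ s_N` of nonnegative skills. -/
def OrderedSkills (s : ℕ → ℝ) (N : ℕ) : Prop :=
  1 ≤ N ∧ (∀ i, 1 ≤ i → i ≤ N → 0 ≤ s i) ∧ ∀ i, 1 ≤ i → i < N → s i ≤ s (i + 1)

/-- Expected effort is a combination of nonnegative optimal efforts with nonnegative weights. When
a signal has probability zero, its posterior is the junk value `0`, which still lies in `[0, 1]`. -/
lemma ebstar_nonneg {v : ℝ → ℝ} {estar : ℝ → ℝ → ℝ → ℝ} {abar q s : ℝ}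
    (hq0 : 0 ≤ q) (hq1 : q ≤ 1) (hv0 : 0 ≤ v s) (hv1 : v s ≤ 1)
    (he : ∀ q', 0 ≤ q' → q' ≤ 1 → 0 ≤ estar s abar q') :
    0 ≤ ebstar v estar abar q s := by
  have h1 : 0 ≤ q * v s := mul_nonneg hq0 hv0
  have h2 : 0 ≤ (1 - q) * (1 - v s) := mul_nonneg (by linarith) (by linarith)
  have h3 : 0 ≤ q * (1 - v s) := mul_nonneg hq0 (by linarith)
  have h4 : 0 ≤ (1 - q) * v s := mul_nonneg (by linarith) hv0
  have post : ∀ x y : ℝ, 0 ≤ x → 0 ≤ y → 0 ≤ estar s abar (x / (x + y)) := fun x y hx hy =>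
    he _ (div_nonneg hx (by linarith)) (div_le_one_of_le₀ (by linarith) (by linarith))
  exact add_nonneg (mul_nonneg (add_nonneg h1 h2) (post _ _ h1 h2))
    (mul_nonneg (add_nonneg h3 h4) (post _ _ h3 h4))

/-- **Lemma 9 (non-monotonic Bayesian effort generates a multimodal skill distribution).**
Suppose `λ` is increasing.  Fix `ā` and `q`; if the Bayesian expected effort
`s ↦ e_b⋆(s,ā,q)` is non-monotonic in `s` on `[0,∞)` (neither weakly increasing nor weakly
decreasing), then there exist a decay rate `μ > 0` and a finite ordered skill set `S` such
that the steady-state skill distribution is multimodal. -/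
theorem stmt_18
    (β γ : ℝ) (hγ : 0 < γ) (hβγ : γ < β)
    (lam : ℝ → ℝ)
    (hlam_pos : ∀ x, 0 ≤ x → 0 < lam x)
    (hlam_mono : StrictMonoOn lam (Ici 0))
    (v : ℝ → ℝ)
    (hv_range : ∀ x, 0 ≤ x → 1 / 2 ≤ v x ∧ v x ≤ 1)
    (hv_mono : MonotoneOn v (Ici 0))
    (hv_concave : ConcaveOn ℝ (Ici 0) v)
    (q : ℝ) (hq0 : 0 ≤ q) (hq1 : q ≤ 1)
    (abar : ℝ) (habar : 0 ≤ abar)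
    (estar : ℝ → ℝ → ℝ → ℝ)
    (hestar : ∀ s ab q', 0 ≤ s → 0 ≤ ab → 0 ≤ q' → q' ≤ 1 →
      IsGreatest {e : ℝ | 0 ≤ e ∧ ∀ e', 0 ≤ e' →
        q' * min 1 (β * (s + e' + ab)) + (1 - q') * min 1 (β * (s + e')) - γ * e' ≤
          q' * min 1 (β * (s + e + ab)) + (1 - q') * min 1 (β * (s + e)) - γ * e}
        (estar s ab q'))
    (heb_nonmono : ¬ MonotoneOn (ebstar v estar abar q) (Ici 0) ∧
      ¬ AntitoneOn (ebstar v estar abar q) (Ici 0)) :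
    ∃ μ, 0 < μ ∧ ∃ (N : ℕ) (s : ℕ → ℝ), OrderedSkills s N ∧
      Multimodal (piDist lam (ebstar v estar abar q) s N μ) N := by
  have hnn : ∀ x, 0 ≤ x → 0 ≤ ebstar v estar abar q x := fun x hx =>
    ebstar_nonneg hq0 hq1 (by linarith [(hv_range x hx).1]) (hv_range x hx).2
      fun q' h0 h1 => (hestar x abar q' hx habar h0 h1).1.1
  have hanti := heb_nonmono.2
  simp only [AntitoneOn, mem_Ici] at hanti
  push Not at hanti
  obtain ⟨a, ha, b, hb, hab, hlt⟩ := hanti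
  generalize ebstar v estar abar q = eb at hnn hlt
  have hpa := hlam_pos _ (hnn a ha)
  have hrate : lam (eb a) < lam (eb b) := hlam_mono (hnn a ha) (hnn b hb) hlt
  obtain ⟨μ, hμa, hμb⟩ := exists_between hrate
  have hμ : 0 < μ := hpa.trans hμa
  -- The skill set `(a, b, b)`; values outside the indices `1, 2, 3` play no role.
  set s : ℕ → ℝ := fun i => if i ≤ 1 then a else b with hs
  have w1 : piW lam eb s μ 1 = 1 := by simp [piW]
  have w2 : piW lam eb s μ 2 = lam (eb a) / μ := by simp [piW, hs]
  have w3 : piW lam eb s μ 3 = lam (eb a) / μ * (lam (eb b) / μ) := by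
    simp [piW, hs, Finset.prod_Icc_succ_top]
    ring
  have h2pos : 0 < lam (eb a) / μ := div_pos hpa hμ
  have hdown : piW lam eb s μ 2 < piW lam eb s μ 1 := by
    rw [w1, w2]; exact (div_lt_one hμ).2 hμa
  have hup : piW lam eb s μ 2 < piW lam eb s μ 3 := by
    rw [w2, w3]; exact lt_mul_of_one_lt_right h2pos ((one_lt_div hμ).2 hμb)
  have hsum : 0 < ∑ j ∈ Finset.Icc 1 3, piW lam eb s μ j := by
    simp only [Finset.sum_Icc_succ_top (show 1 ≤ 2 + 1 by norm_num),
      Finset.sum_Icc_succ_top (show 1 ≤ 1 + 1 by norm_num), Finset.Icc_self, Finset.sum_singleton]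
    norm_num only
    linarith
  refine ⟨μ, hμ, 3, s, ⟨by norm_num, ?_, ?_⟩, 1, 3, ?_, ?_, by norm_num⟩
  · intro i _ _
    simp only [hs]
    split_ifs <;> assumption
  · intro i _ _
    simp only [hs]
    split_ifs <;> first | omega | linarith
  · exact ⟨le_rfl, by norm_num, Or.inl rfl, Or.inr (div_lt_div_of_pos_right hdown hsum)⟩
  · exact ⟨by norm_num, le_rfl, Or.inr (div_lt_div_of_pos_right hup hsum), Or.inl rfl⟩
end
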